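/- Let |S| = n, let 1 ≤ k ≤ n, and let Q_0 = ∅, Q_1, …, Q_k be a greedy sequence for the total utility U of length k (part of a greedy sequence that, continued for n steps, exhausts S). Then for every subset OPT ⊆ S with |OPT| ≤ k, U(Q_k) ≥ max{1 − 1/e, k/n} · U(OPT); i.e., the greedy algorithm achieves approximation ratio max{1 − 1/e, k/n} for TOPS. -/

import Mathlib

open Finset

/-- Utility of a single trajectory with preference function `ψ` over a set of sites `Q`:
the maximum preference score over `Q`, with value `0` on the empty set. -/
noncomputable def trajU {S : Type*} (ψ : S → ℝ) (Q : Finset S) : ℝ :=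
  if h : Q.Nonempty then Q.sup' h ψ else 0

/-- Total utility: sum of the per-trajectory utilities over all trajectories. -/
noncomputable def totalU {T S : Type*} [Fintype T] (ψ : T → S → ℝ) (Q : Finset S) : ℝ :=
  ∑ j, trajU (ψ j) Q

/-- A greedy sequence of length `k` for a set function `f` on subsets of a finite type `S`:
`Q 0 = ∅` and at each step `θ` (for `1 ≤ θ ≤ k`), `Q θ` is obtained from `Q (θ-1)` by
inserting a new element `s_θ ∈ S \ Q (θ-1)`, chosen so that no other single insertion
gives a larger value of `f`. -/
def IsGreedySeq {S : Type*} [DecidableEq S] (f : Finset S → ℝ)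
    (Q : ℕ → Finset S) (k : ℕ) : Prop :=
  Q 0 = ∅ ∧ ∀ θ, 1 ≤ θ → θ ≤ k →
    (∃ s, s ∉ Q (θ - 1) ∧ Q θ = insert s (Q (θ - 1))) ∧
    ∀ s : S, f (insert s (Q (θ - 1))) ≤ f (Q θ)

/-!
Let `f` be monotone and submodular, and let `Q` be a greedy sequence for `f`. The marginal gains at
`Q m` of the elements of `A \ Q m` add up to at least the gap `f A - f (Q m)`, and none exceeds the
gain of the greedy step, so that step closes at least a fraction `1 / #(A \ Q m)` of the gap. For
`#A ≤ k` the gap shrinks by `1 - 1 / k` at every step, hence by `(1 - 1 / k) ^ k ≤ 1 / e` after `k`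
steps. For `A = univ` we have `#(A \ Q m) = n - m`, and the product of the factors
`1 - 1 / (n - m)` telescopes to `1 - k / n`.
-/

/-- A function on a lattice is submodular if `f (a ⊔ b) + f (a ⊓ b) ≤ f a + f b`; for
`α = Finset S` this is the diminishing-returns property used to analyse greedy algorithms. -/
def IsSubmodular {α β : Type*} [Lattice α] [Add β] [LE β] (f : α → β) : Prop :=
  ∀ a b, f (a ⊔ b) + f (a ⊓ b) ≤ f a + f b

namespace IsSubmodular

lemma of_map_sup {α β : Type*} [Lattice α] [AddCommMonoid β] [LinearOrder β]
    [IsOrderedAddMonoid β] {f : α → β} (hf : ∀ a b, f (a ⊔ b) = f a ⊔ f b) :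
    IsSubmodular f := fun a b ↦ by
  calc f (a ⊔ b) + f (a ⊓ b)
      ≤ f a ⊔ f b + f a ⊓ f b := by
        rw [hf]
        gcongr
        exact (Monotone.of_map_sup hf).map_inf_le a b
    _ = f a + f b := max_add_min _ _

lemma sum {ι α β : Type*} [Lattice α] [AddCommMonoid β] [Preorder β] [IsOrderedAddMonoid β]
    {s : Finset ι} {f : ι → α → β} (hf : ∀ i ∈ s, IsSubmodular (f i)) :
    IsSubmodular fun a ↦ ∑ i ∈ s, f i a := fun a b ↦ by
  simp only [← sum_add_distrib]
  exact sum_le_sum fun i hi ↦ hf i hi a b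

lemma union_sub_le_sum {S β : Type*} [DecidableEq S] [AddCommGroup β] [Preorder β]
    [IsOrderedAddMonoid β] {f : Finset S → β} (hf : IsSubmodular f) (Q A : Finset S) :
    f (Q ∪ A) - f Q ≤ ∑ s ∈ A, (f (insert s Q) - f Q) := by
  induction A using Finset.induction_on with
  | empty => simp
  | insert s A hs ih =>
    have hunion : (Q ∪ A) ∪ insert s Q = Q ∪ insert s A := by grind
    have hinter : (Q ∪ A) ∩ insert s Q = Q := by grind
    have hstep : f (Q ∪ insert s A) + f Q ≤ f (Q ∪ A) + f (insert s Q) := by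
      simpa only [sup_eq_union, inf_eq_inter, hunion, hinter] using hf (Q ∪ A) (insert s Q)
    calc f (Q ∪ insert s A) - f Q
        ≤ (f (insert s Q) - f Q) + (f (Q ∪ A) - f Q) := by
          rw [← sub_nonneg] at hstep ⊢
          convert hstep using 1
          abel
      _ ≤ (f (insert s Q) - f Q) + ∑ t ∈ A, (f (insert t Q) - f Q) := by gcongr
      _ = ∑ t ∈ insert s A, (f (insert t Q) - f Q) := by rw [sum_insert hs]

end IsSubmodular

section Utility

variable {S : Type*}

lemma trajU_empty (ψ : S → ℝ) : trajU ψ ∅ = 0 := by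
  simp [trajU]

lemma trajU_le_iff {ψ : S → ℝ} (hψ : ∀ s, 0 ≤ ψ s) {Q : Finset S} {a : ℝ} :
    trajU ψ Q ≤ a ↔ 0 ≤ a ∧ ∀ s ∈ Q, ψ s ≤ a := by
  rcases Q.eq_empty_or_nonempty with rfl | hQ
  · simp [trajU_empty]
  · obtain ⟨s, hs⟩ := id hQ
    simpa [trajU, hQ] using fun h ↦ (hψ s).trans (h s hs)

lemma trajU_union [DecidableEq S] {ψ : S → ℝ} (hψ : ∀ s, 0 ≤ ψ s) (A B : Finset S) :
    trajU ψ (A ∪ B) = max (trajU ψ A) (trajU ψ B) :=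
  eq_of_forall_ge_iff fun a ↦ by
    simp only [max_le_iff, trajU_le_iff hψ, forall_mem_union]
    tauto

variable {T : Type*} [Fintype T]

lemma totalU_empty (ψ : T → S → ℝ) : totalU ψ ∅ = 0 := by
  simp only [totalU, trajU_empty, sum_const_zero]

lemma monotone_totalU {ψ : T → S → ℝ} (hψ : ∀ j s, 0 ≤ ψ j s) : Monotone (totalU ψ) := by
  classical
  exact fun A B hAB ↦ sum_le_sum fun j _ ↦ Monotone.of_map_sup (trajU_union (hψ j)) hAB

lemma isSubmodular_totalU [DecidableEq S] {ψ : T → S → ℝ} (hψ : ∀ j s, 0 ≤ ψ j s) :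
    IsSubmodular (totalU ψ) :=
  .sum fun j _ ↦ .of_map_sup (trajU_union (hψ j))

end Utility

namespace IsGreedySeq

variable {S : Type*} [DecidableEq S] {f : Finset S → ℝ} {Q : ℕ → Finset S} {A : Finset S}
  {k l : ℕ} {r : ℝ}

lemma of_le (hQ : IsGreedySeq f Q l) (hkl : k ≤ l) : IsGreedySeq f Q k :=
  ⟨hQ.1, fun θ hθ hθk ↦ hQ.2 θ hθ (hθk.trans hkl)⟩

lemma exists_eq_insert (hQ : IsGreedySeq f Q (k + 1)) : ∃ s ∉ Q k, Q (k + 1) = insert s (Q k) :=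
  (hQ.2 (k + 1) k.succ_pos le_rfl).1

lemma insert_le (hQ : IsGreedySeq f Q (k + 1)) (s : S) : f (insert s (Q k)) ≤ f (Q (k + 1)) :=
  (hQ.2 (k + 1) k.succ_pos le_rfl).2 s

lemma card_eq (hQ : IsGreedySeq f Q k) : #(Q k) = k := by
  induction k with
  | zero => rw [hQ.1, card_empty]
  | succ k ih =>
    obtain ⟨s, hs, hQs⟩ := hQ.exists_eq_insert
    rw [hQs, card_insert_of_notMem hs, ih (hQ.of_le k.le_succ)]

lemma sub_le_card_sdiff_mul (hQ : IsGreedySeq f Q (k + 1)) (hmono : Monotone f)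
    (hsub : IsSubmodular f) (A : Finset S) :
    f A - f (Q k) ≤ #(A \ Q k) * (f (Q (k + 1)) - f (Q k)) :=
  calc f A - f (Q k)
      ≤ f (Q k ∪ A \ Q k) - f (Q k) := by
        gcongr
        exact hmono (by simp)
    _ ≤ ∑ s ∈ A \ Q k, (f (insert s (Q k)) - f (Q k)) := hsub.union_sub_le_sum _ _
    _ ≤ #(A \ Q k) • (f (Q (k + 1)) - f (Q k)) :=
        sum_le_card_nsmul _ _ _ fun s _ ↦ sub_le_sub_right (hQ.insert_le s) _
    _ = #(A \ Q k) * (f (Q (k + 1)) - f (Q k)) := nsmul_eq_mul _ _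

lemma sub_succ_le_mul_sub (hQ : IsGreedySeq f Q (k + 1)) (hmono : Monotone f)
    (hsub : IsSubmodular f) (hr : 0 < r) (hA : #(A \ Q k) ≤ r) :
    f A - f (Q (k + 1)) ≤ (1 - 1 / r) * (f A - f (Q k)) := by
  have hgain : 0 ≤ f (Q (k + 1)) - f (Q k) := by
    obtain ⟨s, -, hQs⟩ := hQ.exists_eq_insert
    exact sub_nonneg.2 (hmono (hQs ▸ subset_insert s (Q k)))
  have hgap : (f A - f (Q k)) / r ≤ f (Q (k + 1)) - f (Q k) :=
    div_le_of_le_mul₀ hr.le hgain <|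
      calc f A - f (Q k)
          ≤ #(A \ Q k) * (f (Q (k + 1)) - f (Q k)) := hQ.sub_le_card_sdiff_mul hmono hsub A
        _ ≤ r * (f (Q (k + 1)) - f (Q k)) := by gcongr
        _ = (f (Q (k + 1)) - f (Q k)) * r := mul_comm _ _
  calc f A - f (Q (k + 1))
      ≤ (f A - f (Q k)) - (f A - f (Q k)) / r := by linarith
    _ = (1 - 1 / r) * (f A - f (Q k)) := by ring

lemma sub_le_pow_mul_sub (hQ : IsGreedySeq f Q k) (hmono : Monotone f) (hsub : IsSubmodular f)
    (hr : 1 ≤ r) (hA : #A ≤ r) :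
    f A - f (Q k) ≤ (1 - 1 / r) ^ k * (f A - f ∅) := by
  induction k with
  | zero => simp [hQ.1]
  | succ k ih =>
    have hsdiff : (#(A \ Q k) : ℝ) ≤ r :=
      (Nat.cast_le.2 (card_le_card sdiff_subset)).trans hA
    have hratio : 0 ≤ 1 - 1 / r := sub_nonneg.2 (div_le_one_of_le₀ hr (by linarith))
    calc f A - f (Q (k + 1))
        ≤ (1 - 1 / r) * (f A - f (Q k)) :=
          hQ.sub_succ_le_mul_sub hmono hsub (by linarith) hsdiff
      _ ≤ (1 - 1 / r) * ((1 - 1 / r) ^ k * (f A - f ∅)) := by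
          gcongr
          exact ih (hQ.of_le k.le_succ)
      _ = (1 - 1 / r) ^ (k + 1) * (f A - f ∅) := by ring

lemma one_sub_inv_exp_one_mul_le (hQ : IsGreedySeq f Q k) (hmono : Monotone f)
    (hsub : IsSubmodular f) (h0 : 0 ≤ f ∅) (hA : #A ≤ k) :
    (1 - 1 / Real.exp 1) * f A ≤ f (Q k) := by
  have hA0 : 0 ≤ f A := h0.trans (hmono (empty_subset A))
  rcases k.eq_zero_or_pos with rfl | hk
  · have hAQ : A = Q 0 := by rw [hQ.1, card_eq_zero.1 (Nat.le_zero.1 hA)]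
    rw [← hAQ]
    exact mul_le_of_le_one_left hA0 (sub_le_self _ (by positivity))
  · have hk1 : (1 : ℝ) ≤ k := Nat.one_le_cast.2 hk
    have hpow : (1 - 1 / (k : ℝ)) ^ k ≤ 1 / Real.exp 1 := by
      simpa only [Real.exp_neg, one_div] using Real.one_sub_div_pow_le_exp_neg hk1
    have hgap : f A - f (Q k) ≤ 1 / Real.exp 1 * f A :=
      calc f A - f (Q k)
          ≤ (1 - 1 / (k : ℝ)) ^ k * (f A - f ∅) :=
            hQ.sub_le_pow_mul_sub hmono hsub hk1 (Nat.cast_le.2 hA)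
        _ ≤ 1 / Real.exp 1 * f A :=
            mul_le_mul hpow (sub_le_self _ h0) (sub_nonneg.2 (hmono (empty_subset A)))
              (by positivity)
    linarith

variable [Fintype S]

lemma le_card (hQ : IsGreedySeq f Q k) : k ≤ Fintype.card S :=
  hQ.card_eq ▸ card_le_univ (Q k)

lemma univ_sub_le_mul_sub (hQ : IsGreedySeq f Q k) (hmono : Monotone f) (hsub : IsSubmodular f) :
    f univ - f (Q k) ≤ (1 - k / Fintype.card S) * (f univ - f ∅) := by
  induction k with
  | zero => simp [hQ.1]
  | succ k ih =>
    set n := Fintype.card S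
    have hQk := hQ.of_le k.le_succ
    have hkn : (k : ℝ) + 1 ≤ n := mod_cast hQ.le_card
    have hn : (0 : ℝ) < n := by linarith [k.cast_nonneg (α := ℝ)]
    have hrest : (0 : ℝ) < n - k := by linarith
    have hsdiff : (#(univ \ Q k) : ℝ) = n - k := by
      rw [cast_card_sdiff (subset_univ _), card_univ, hQk.card_eq]
    have hratio : 0 ≤ 1 - 1 / ((n : ℝ) - k) :=
      sub_nonneg.2 (div_le_one_of_le₀ (by linarith) hrest.le)
    calc f univ - f (Q (k + 1))
        ≤ (1 - 1 / ((n : ℝ) - k)) * (f univ - f (Q k)) :=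
          hQ.sub_succ_le_mul_sub hmono hsub hrest hsdiff.le
      _ ≤ (1 - 1 / ((n : ℝ) - k)) * ((1 - k / n) * (f univ - f ∅)) := by
          gcongr
          exact ih hQk
      _ = (1 - (k + 1 : ℕ) / n) * (f univ - f ∅) := by
          push_cast
          field_simp
          ring

lemma div_card_mul_le (hQ : IsGreedySeq f Q k) (hmono : Monotone f) (hsub : IsSubmodular f)
    (h0 : 0 ≤ f ∅) (A : Finset S) :
    k / Fintype.card S * f A ≤ f (Q k) := by
  have hkn : (k : ℝ) / Fintype.card S ≤ 1 :=
    div_le_one_of_le₀ (Nat.cast_le.2 hQ.le_card) (Nat.cast_nonneg _)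
  have hgap := hQ.univ_sub_le_mul_sub hmono hsub
  calc k / Fintype.card S * f A
      ≤ k / Fintype.card S * f univ := by
        gcongr
        exact hmono (subset_univ A)
    _ ≤ f (Q k) := by linarith [mul_nonneg (sub_nonneg.2 hkn) h0]

end IsGreedySeq

theorem greedy_max_approx_general {S : Type*} [Fintype S] [DecidableEq S] {f : Finset S → ℝ}
    (hmono : Monotone f) (hsub : IsSubmodular f) (h0 : 0 ≤ f ∅) {k : ℕ} {Q : ℕ → Finset S}
    (hQ : IsGreedySeq f Q k) {A : Finset S} (hA : #A ≤ k) :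
    max (1 - 1 / Real.exp 1) ((k : ℝ) / Fintype.card S) * f A ≤ f (Q k) := by
  rw [max_mul_of_nonneg _ _ (h0.trans (hmono (empty_subset A)))]
  exact max_le (hQ.one_sub_inv_exp_one_mul_le hmono hsub h0 hA)
    (hQ.div_card_mul_le hmono hsub h0 A)

/-- the greedy algorithm achieves approximation ratio `max{1 − 1/e, k/n}`
for TOPS: if `Q` is a greedy sequence for the total utility `U` that, continued for
`n = |S|` steps, exhausts `S`, then for every `OPT ⊆ S` with `|OPT| ≤ k`,
`U(Q_k) ≥ max{1 − 1/e, k/n}·U(OPT)`. -/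
theorem greedy_max_approx {T S : Type*} [Fintype T] [Fintype S] [DecidableEq S]
    (ψ : T → S → ℝ) (hψ : ∀ j s, 0 ≤ ψ j s ∧ ψ j s ≤ 1)
    (n k : ℕ) (hn : Fintype.card S = n) (hk1 : 1 ≤ k) (hk : k ≤ n)
    (Q : ℕ → Finset S) (hgreedy : IsGreedySeq (totalU ψ) Q n)
    (hQn : Q n = Finset.univ) :
    ∀ OPT : Finset S, OPT.card ≤ k →
      max (1 - 1 / Real.exp 1) ((k : ℝ) / (n : ℝ)) * totalU ψ OPT ≤ totalU ψ (Q k) := by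
  subst hn
  have hψ0 : ∀ j s, 0 ≤ ψ j s := fun j s ↦ (hψ j s).1
  exact fun OPT hOPT ↦ greedy_max_approx_general (monotone_totalU hψ0) (isSubmodular_totalU hψ0)
    (totalU_empty ψ).ge (hgreedy.of_le hk) hOPT
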